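/- For every ε > 0 there exists n₀ such that every graph G on n ≥ n₀ vertices with minimum degree at least (9/10 + ε)·n admits a fractional triangle decomposition, i.e., an assignment of non-negative weights to the triangles of G such that for every edge the sum of the weights of the triangles containing it equals 1. -/

import Mathlib

/-!
The degree bound alone suffices: any graph on `n ≥ 1` vertices with minimum degree at least
`9n/10` has a fractional triangle decomposition.

Give all triangles the same weight `w₀`, chosen so that the total edge weight is right. An edge `e`
then receives `w₀ * t(e)`, with `t(e)` the number of triangles on `e`, and the errors
`1 - w₀ * t(e)` sum to zero. They are corrected by moving weight between opposite edges of copies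
of `K₄`: in a `K₄` on `a, b, c, d`, adding `s / 2` to the triangles `abc`, `abd` and subtracting
`s / 2` from `acd`, `bcd` moves `s` from `cd` to `ab` and leaves the other four edges unchanged
(`sum_shift`). If every such move is small enough, no triangle becomes negative (`shift_lower`).
So it is enough to find a flow with given demands and bounded capacities on the graph whose nodes
are the edges of `G` and whose arcs join opposite edges of a `K₄`.

Such a flow exists once every cut satisfies the obvious necessary inequality (`flow`). For the cut
inequality (`cut_bound`), let `A, B` partition the edges, with average triangle counts `b n` and
`a n`. An edge on `t` triangles is opposite, in a `K₄`, to all edges inside a set of `t` vertices,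
so it misses at most the pairs outside that set. Counting the arcs between `A` and `B` from
either side gives two lower bounds, at least one of which always suffices. This reduces to an
inequality between a few real numbers (`cut_numeric`), in which the degree condition enters through
`b ≥ 4/5` and through the fact that few edges can lie in many triangles unless `G` has more than
`9n²/20` edges (`sum_codeg_le`).

Throughout, edges are replaced by ordered pairs of adjacent vertices; this doubles all the counts
and avoids quotients.
-/


open scoped Classical

/-- A fractional triangle decomposition of `G`: nonnegative weights on triangles such
that for every edge, the weights of triangles containing it sum to 1. -/
def HasFracTriangleDecomp {V : Type} [Fintype V] (G : SimpleGraph V) : Prop :=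
  ∃ w : Finset V → ℝ, (∀ t, 0 ≤ w t) ∧
    ∀ u v : V, G.Adj u v →
      ∑ t ∈ (G.cliqueFinset 3).filter (fun t => u ∈ t ∧ v ∈ t), w t = 1

/-! ### Flows with prescribed demands -/

/-- First-order optimality: if `r` is at least as short as every `r - s q` with `s ∈ (0, 1]`, then
`⟨r, q⟩ ≤ 0`. -/
theorem first_order {ι : Type} [Fintype ι] (r q : ι → ℝ)
    (h : ∀ s : ℝ, 0 < s → s ≤ 1 → ∑ i, r i ^ 2 ≤ ∑ i, (r i - s * q i) ^ 2) :
    ∑ i, r i * q i ≤ 0 := by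
  by_contra! hp
  have key : ∀ s : ℝ, 0 < s → s ≤ 1 → 2 * (∑ i, r i * q i) ≤ s * ∑ i, q i ^ 2 := by
    intro s hs hs1
    have h1 := h s hs hs1
    have h2 : ∑ i, (r i - s * q i) ^ 2
        = ∑ i, r i ^ 2 - 2 * s * (∑ i, r i * q i) + s ^ 2 * ∑ i, q i ^ 2 := by
      rw [Finset.mul_sum, Finset.mul_sum, ← Finset.sum_sub_distrib, ← Finset.sum_add_distrib]
      exact Finset.sum_congr rfl fun i _ => by ring
    rw [h2] at h1
    have : s * (2 * (∑ i, r i * q i)) ≤ s * (s * ∑ i, q i ^ 2) := by nlinarith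
    exact le_of_mul_le_mul_left this hs
  set P := ∑ i, r i * q i
  have hQ : 0 ≤ ∑ i, q i ^ 2 := Finset.sum_nonneg fun i _ => sq_nonneg _
  set Q := ∑ i, q i ^ 2
  have h1 := key (P / (P + Q)) (by positivity) (by rw [div_le_one (by positivity)]; linarith)
  rw [div_mul_eq_mul_div, le_div_iff₀ (by positivity)] at h1
  nlinarith

/-- A form of the max-flow min-cut theorem. Here `x i j` is the amount sent from `j` to `i`, bounded by
the capacity `c i j`, and `d i` is the demand at `i`. If no set demands more than the capacity into
it, all demands can be met.

Take a feasible `x` minimising the sum of squares of the unmet demands `r`. By optimality, all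
arcs into the set `A` where `r` is maximal are saturated, and all arcs out of it are empty. The cut
condition at `A` then gives `r ≤ 0`, and `∑ r = 0` forces `r = 0`. -/
theorem flow {ι : Type} [Fintype ι] [DecidableEq ι] (c : ι → ι → ℝ) (d : ι → ℝ)
    (hc : ∀ i j, 0 ≤ c i j) (hd : ∑ i, d i = 0)
    (hcut : ∀ A : Finset ι, ∑ i ∈ A, d i ≤ ∑ i ∈ A, ∑ j ∈ Aᶜ, c i j) :
    ∃ x : ι → ι → ℝ, (∀ i j, 0 ≤ x i j) ∧ (∀ i j, x i j ≤ c i j) ∧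
      ∀ i, ∑ j, (x i j - x j i) = d i := by
  set K : Set (ι → ι → ℝ) := Set.univ.pi fun i => Set.univ.pi fun j => Set.Icc 0 (c i j) with hK
  have memK : ∀ x, x ∈ K ↔ ∀ i j, 0 ≤ x i j ∧ x i j ≤ c i j := by
    intro x; simp only [hK, Set.mem_pi, Set.mem_univ, true_implies, Set.mem_Icc]
  have hKc : IsCompact K := isCompact_univ_pi fun i => isCompact_univ_pi fun j => isCompact_Icc
  have hKn : K.Nonempty := ⟨fun _ _ => 0, (memK _).2 fun i j => ⟨le_rfl, hc i j⟩⟩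
  let F : (ι → ι → ℝ) → ℝ := fun x => ∑ i, (d i - ∑ j, (x i j - x j i)) ^ 2
  have hF : Continuous F := by fun_prop
  obtain ⟨x, hxK, hmin⟩ := hKc.exists_isMinOn hKn hF.continuousOn
  have hx := (memK x).1 hxK
  refine ⟨x, fun i j => (hx i j).1, fun i j => (hx i j).2, ?_⟩
  set r : ι → ℝ := fun i => d i - ∑ j, (x i j - x j i) with hr
  have hfo : ∀ y ∈ K, ∑ i, ∑ j, (y i j - x i j) * (r i - r j) ≤ 0 := by
    intro y hyK
    have hy := (memK y).1 hyK
    have h := first_order r (fun i => ∑ j, ((y i j - x i j) - (y j i - x j i))) (by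
      intro s hs hs1
      have hz : (fun i j => x i j + s * (y i j - x i j)) ∈ K := by
        rw [memK]
        intro i j
        have h1 := hx i j
        have h2 := hy i j
        constructor <;> nlinarith
      have := hmin hz
      simp only [Set.mem_ofPred_eq, F] at this
      refine this.trans (le_of_eq (Finset.sum_congr rfl fun i _ => ?_))
      congr 1
      rw [hr, Finset.mul_sum]
      simp only
      rw [sub_sub, ← Finset.sum_add_distrib]
      congr 1
      exact Finset.sum_congr rfl fun j _ => by ring)
    refine le_trans (le_of_eq ?_) h
    have e1 : ∑ i, ∑ j, (y j i - x j i) * r i = ∑ i, ∑ j, (y i j - x i j) * r j :=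
      Finset.sum_comm
    calc ∑ i, ∑ j, (y i j - x i j) * (r i - r j)
        = ∑ i, ∑ j, (y i j - x i j) * r i - ∑ i, ∑ j, (y i j - x i j) * r j := by
          simp only [mul_sub, Finset.sum_sub_distrib]
      _ = ∑ i, ∑ j, (y i j - x i j) * r i - ∑ i, ∑ j, (y j i - x j i) * r i := by rw [e1]
      _ = ∑ i, r i * ∑ j, ((y i j - x i j) - (y j i - x j i)) := by
          rw [← Finset.sum_sub_distrib]
          refine Finset.sum_congr rfl fun i _ => ?_
          rw [← Finset.sum_sub_distrib, Finset.mul_sum]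
          exact Finset.sum_congr rfl fun j _ => by ring
  have hsum : ∑ i, r i = 0 := by
    simp only [hr, Finset.sum_sub_distrib, hd]
    rw [Finset.sum_comm]; simp
  have hle : ∀ i, r i ≤ 0 := by
    by_contra! hne
    obtain ⟨i₁, hi₁⟩ := hne
    obtain ⟨i₀, -, hi₀⟩ := Finset.exists_max_image Finset.univ r ⟨i₁, Finset.mem_univ _⟩
    have hpos : 0 < r i₀ := hi₁.trans_le (hi₀ i₁ (Finset.mem_univ _))
    set A : Finset ι := Finset.univ.filter fun i => r i = r i₀ with hA
    have memA : ∀ i, i ∈ A ↔ r i = r i₀ := by simp [hA]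
    have hlt : ∀ i ∈ A, ∀ j ∉ A, r j < r i := by
      intro i hi j hj
      rw [memA] at hi hj
      rw [hi]
      exact lt_of_le_of_ne (hi₀ j (Finset.mem_univ _)) hj
    -- The competitor saturates every arc into `A` and empties every arc out of it.
    let y : ι → ι → ℝ := fun i j =>
      if i ∈ A ∧ j ∉ A then c i j else if i ∉ A ∧ j ∈ A then 0 else x i j
    have hyK : y ∈ K := by
      rw [memK]
      intro i j
      have := hx i j
      have := hc i j
      simp only [y]
      split_ifs <;> constructor <;> linarith
    have hterm : ∀ i j, 0 ≤ (y i j - x i j) * (r i - r j) := by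
      intro i j
      have h1 := hx i j
      simp only [y]
      split_ifs with h2 h3
      · have := hlt i h2.1 j h2.2
        exact mul_nonneg (by linarith) (by linarith)
      · have := hlt j h3.2 i h3.1
        exact mul_nonneg_of_nonpos_of_nonpos (by linarith) (by linarith)
      · simp
    have hzero : ∀ i j, (y i j - x i j) * (r i - r j) = 0 := by
      have h0 : ∑ i, ∑ j, (y i j - x i j) * (r i - r j) = 0 :=
        le_antisymm (hfo y hyK)
          (Finset.sum_nonneg fun i _ => Finset.sum_nonneg fun j _ => hterm i j)
      intro i j
      have h1 := (Finset.sum_eq_zero_iff_of_nonneg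
        (fun i _ => Finset.sum_nonneg fun j _ => hterm i j)).1 h0 i (Finset.mem_univ _)
      exact (Finset.sum_eq_zero_iff_of_nonneg (fun j _ => hterm i j)).1 h1 j (Finset.mem_univ _)
    have hsat : ∀ i ∈ A, ∀ j ∈ Aᶜ, x i j - x j i = c i j := by
      intro i hi j hj
      rw [Finset.mem_compl] at hj
      have hl := hlt i hi j hj
      have h1 := hzero i j
      have h2 := hzero j i
      simp only [y, hi, hj, not_true_eq_false, not_false_eq_true, and_self,
        if_true, if_false, mul_eq_zero] at h1 h2
      have h1' : c i j - x i j = 0 := h1.resolve_right (by linarith)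
      have h2' : 0 - x j i = 0 := h2.resolve_right (by linarith)
      linarith
    have hdiv : ∑ i ∈ A, ∑ j, (x i j - x j i) = ∑ i ∈ A, ∑ j ∈ Aᶜ, c i j := by
      have e0 : ∑ i ∈ A, ∑ j ∈ A, (x i j - x j i) = 0 := by
        simp only [Finset.sum_sub_distrib]
        rw [Finset.sum_comm]; simp
      have e1 : ∑ i ∈ A, ∑ j, (x i j - x j i)
          = ∑ i ∈ A, ∑ j ∈ A, (x i j - x j i) + ∑ i ∈ A, ∑ j ∈ Aᶜ, (x i j - x j i) := by
        rw [← Finset.sum_add_distrib]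
        exact Finset.sum_congr rfl fun i _ => (Finset.sum_add_sum_compl A _).symm
      rw [e1, e0, zero_add]
      exact Finset.sum_congr rfl fun i hi => Finset.sum_congr rfl fun j hj => hsat i hi j hj
    have h1 : ∑ i ∈ A, r i ≤ 0 := by
      simp only [hr]
      rw [Finset.sum_sub_distrib, hdiv]
      linarith [hcut A]
    have h2 : 0 < ∑ i ∈ A, r i :=
      Finset.sum_pos (fun i hi => by rw [(memA i).1 hi]; exact hpos) ⟨i₀, (memA i₀).2 rfl⟩
    linarith
  intro i
  have := (Finset.sum_eq_zero_iff_of_nonpos (fun i _ => hle i)).1 hsum i (Finset.mem_univ _)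
  simp only [hr] at this
  linarith

/-! ### The numerical cut inequality -/

/-- The cut inequality after normalisation: `α`, `β` are the sizes of the two sides (divided by `n²`),
`b`, `a` their average numbers of triangles per edge (divided by `n`), `E` the number of arcs
between them (divided by `n⁴`). -/
theorem cut_numeric (α β a b E : ℝ) (hα : 0 < α) (hβ : 0 < β) (hm : 9 / 10 ≤ α + β)
    (hb : 4 / 5 ≤ b) (ha : a ≤ 1) (hdeg : (a - 9 / 10) * β ≤ α + β - 9 / 10) (hE : 0 ≤ E)
    (h1 : β * (α - (1 - a ^ 2)) ≤ E) (h2 : α * (β - (1 - b ^ 2)) ≤ E) :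
    3 * α * β * (a - b) ≤ (α + β) * E := by
  rcases le_total a b with hab | hab
  · have h3 : 0 ≤ α * β * (b - a) := by have := sub_nonneg.2 hab; positivity
    have h4 : 0 ≤ (α + β) * E := by positivity
    linarith
  by_contra! hcon
  obtain ⟨M, hM⟩ : ∃ M, M = α + β := ⟨_, rfl⟩
  rw [← hM] at hm hdeg hcon
  have hMpos : 0 < M := by linarith
  -- Both lower bounds on the cut fall short; cancel the side that was counted.
  have f1 : α * (M - 3 * (a - b)) < M * (1 - a ^ 2) := by
    have : β * (α * (M - 3 * (a - b))) < β * (M * (1 - a ^ 2)) := by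
      linarith [mul_le_mul_of_nonneg_left h1 hMpos.le]
    exact lt_of_mul_lt_mul_left this hβ.le
  have f2 : β * (M - 3 * (a - b)) < M * (1 - b ^ 2) := by
    have : α * (β * (M - 3 * (a - b))) < α * (M * (1 - b ^ 2)) := by
      linarith [mul_le_mul_of_nonneg_left h2 hMpos.le]
    exact lt_of_mul_lt_mul_left this hα.le
  have f3 : M - 3 * (a - b) < 2 - a ^ 2 - b ^ 2 := by
    have : M * (M - 3 * (a - b)) < M * (2 - a ^ 2 - b ^ 2) := by
      have : M * (M - 3 * (a - b)) = α * (M - 3 * (a - b)) + β * (M - 3 * (a - b)) := by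
        rw [← add_mul, ← hM]
      linarith
    exact lt_of_mul_lt_mul_left this hMpos.le
  -- Since `b ≥ 4/5`, everything is now controlled by the excess of `a` over `9/10`.
  obtain ⟨s, rfl⟩ : ∃ s, a = 9 / 10 + s := ⟨a - 9 / 10, by ring⟩
  have hb1 : b ≤ 1 := hab.trans ha
  have f4 : M - 9 / 10 < -(1 / 20) + 6 / 5 * s - s ^ 2 := by
    have : 0 ≤ (b - 4 / 5) * (11 / 5 - b) := mul_nonneg (by linarith) (by linarith)
    nlinarith
  have hs : 0 < s := by nlinarith [sq_nonneg s]
  have hs1 : s ≤ 1 / 10 := by linarith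
  have f5 : 1 / 20 - 3 / 10 * s + s ^ 2 < α * s := by
    have h3 : α * s = M * s - s * β := by rw [hM]; ring
    have h4 : 0 ≤ (M - 9 / 10) * s := mul_nonneg (by linarith) hs.le
    linarith
  have f6 : M * (2 - 10 * s) ≤ 3 * (M - 3 * (9 / 10 + s - b)) := by
    have : 0 ≤ (1 + 10 * s) * (M - 9 / 10) := mul_nonneg (by linarith) (by linarith)
    linarith
  have f7 : α * (2 - 10 * s) < 3 * (1 - (9 / 10 + s) ^ 2) := by
    have : M * (α * (2 - 10 * s)) < M * (3 * (1 - (9 / 10 + s) ^ 2)) := by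
      linarith [mul_le_mul_of_nonneg_left f6 hα.le]
    exact lt_of_mul_lt_mul_left this hMpos.le
  have f8 : (1 / 20 - 3 / 10 * s + s ^ 2) * (2 - 10 * s) ≤ s * (3 * (1 - (9 / 10 + s) ^ 2)) := by
    have h3 := mul_le_mul_of_nonneg_right f5.le (by linarith : (0 : ℝ) ≤ 2 - 10 * s)
    have h4 := mul_le_mul_of_nonneg_left f7.le hs.le
    linarith
  nlinarith [sq_nonneg (s - 9 / 100), mul_nonneg (sub_nonneg.2 hs1) (sq_nonneg s)]

noncomputable section

/-! ### Counting opposite edges of copies of `K₄` -/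

/-- The ordered pairs `p`, `q` are opposite edges of a copy of `K₄` in `G`. -/
def K4Pair {V : Type} (G : SimpleGraph V) (p q : V × V) : Prop :=
  G.Adj p.1 p.2 ∧ G.Adj q.1 q.2 ∧ G.Adj p.1 q.1 ∧ G.Adj p.1 q.2 ∧ G.Adj p.2 q.1 ∧ G.Adj p.2 q.2

theorem K4Pair.symm {V : Type} {G : SimpleGraph V} {p q : V × V} (h : K4Pair G p q) :
    K4Pair G q p := by
  obtain ⟨h1, h2, h3, h4, h5, h6⟩ := h
  exact ⟨h2, h1, h3.symm, h5.symm, h4.symm, h6.symm⟩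

/-- The common neighbours of `u` and `v`. -/
def commonNbrs {V : Type} [Fintype V] (G : SimpleGraph V) (u v : V) : Finset V :=
  Finset.univ.filter fun z => G.Adj u z ∧ G.Adj v z

/-- The number of common neighbours of the two entries of `p`; for adjacent entries, the number of
triangles on that edge. -/
def codeg {V : Type} [Fintype V] (G : SimpleGraph V) (p : V × V) : ℝ :=
  (commonNbrs G p.1 p.2).card

/-- The ordered pairs of adjacent vertices, so each edge is listed twice. -/
def adjPairs {V : Type} [Fintype V] (G : SimpleGraph V) : Finset (V × V) :=
  Finset.univ.filter fun p => G.Adj p.1 p.2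

/-- The indicator of `K4Pair`. -/
def k4Ind {V : Type} (G : SimpleGraph V) (p q : V × V) : ℝ := if K4Pair G p q then 1 else 0

theorem k4Ind_nonneg {V : Type} (G : SimpleGraph V) (p q : V × V) : 0 ≤ k4Ind G p q := by
  unfold k4Ind; split_ifs <;> norm_num

theorem k4Ind_comm {V : Type} (G : SimpleGraph V) (p q : V × V) :
    k4Ind G p q = k4Ind G q p := by
  unfold k4Ind
  simp only [show K4Pair G p q ↔ K4Pair G q p from ⟨K4Pair.symm, K4Pair.symm⟩]

/-- The number of pairs in `X × Y` that are opposite edges of a copy of `K₄`. -/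
def k4Count {V : Type} (G : SimpleGraph V) (X Y : Finset (V × V)) : ℝ :=
  ∑ p ∈ X, ∑ q ∈ Y, k4Ind G p q

theorem k4Count_comm {V : Type} (G : SimpleGraph V) (X Y : Finset (V × V)) :
    k4Count G X Y = k4Count G Y X := by
  unfold k4Count
  rw [Finset.sum_comm]
  simp only [k4Ind_comm]

/-- Two adjacent common neighbours of the endpoints of `p` form an edge opposite to `p` in a `K₄`, so
at most `n² - t²` pairs are not opposite to `p`, where `t` is the codegree of `p`. -/
theorem row_count {V : Type} [Fintype V] (G : SimpleGraph V) {p : V × V}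
    (hp : p ∈ adjPairs G) {Y : Finset (V × V)} (hY : Y ⊆ adjPairs G) :
    (Y.card : ℝ) - (Fintype.card V : ℝ) ^ 2 + codeg G p ^ 2 ≤ ∑ q ∈ Y, k4Ind G p q := by
  set N := commonNbrs G p.1 p.2 with hN
  have hsub : Y ⊆ Y.filter (K4Pair G p) ∪ (N ×ˢ N)ᶜ := by
    intro q hq
    by_cases hqN : q ∈ N ×ˢ N
    · simp only [Finset.mem_union, Finset.mem_filter, hq, true_and]
      left
      have h1 := hY hq
      simp only [adjPairs, Finset.mem_filter, Finset.mem_univ, true_and] at h1 hp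
      simp only [hN, commonNbrs, Finset.mem_product, Finset.mem_filter, Finset.mem_univ,
        true_and] at hqN
      exact ⟨hp, h1, hqN.1.1, hqN.2.1, hqN.1.2, hqN.2.2⟩
    · simp only [Finset.mem_union, Finset.mem_compl]
      exact Or.inr hqN
  have h1 := (Finset.card_le_card hsub).trans (Finset.card_union_le _ _)
  have h2 : ((N ×ˢ N)ᶜ : Finset (V × V)).card + N.card * N.card
      = Fintype.card V * Fintype.card V := by
    rw [← Finset.card_product, ← Fintype.card_prod]
    exact Finset.card_compl_add_card _
  have h3 : ∑ q ∈ Y, k4Ind G p q = ((Y.filter (K4Pair G p)).card : ℝ) := by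
    simp [k4Ind]
  have h1' : (Y.card : ℝ) ≤ (Y.filter (K4Pair G p)).card + ((N ×ˢ N)ᶜ : Finset (V × V)).card := by
    exact_mod_cast h1
  have h2' : (((N ×ˢ N)ᶜ : Finset (V × V)).card : ℝ) + N.card * N.card
      = Fintype.card V * Fintype.card V := by exact_mod_cast h2
  rw [h3]
  have : codeg G p = N.card := rfl
  rw [this]
  nlinarith

/-- `row_count` summed over `X`, with the sum of `codeg²` bounded below by Cauchy–Schwarz. -/
theorem cut_count {V : Type} [Fintype V] (G : SimpleGraph V) {X Y : Finset (V × V)}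
    (hX : X ⊆ adjPairs G) (hY : Y ⊆ adjPairs G) :
    (X.card : ℝ) ^ 2 * (Y.card - (Fintype.card V : ℝ) ^ 2) + (∑ p ∈ X, codeg G p) ^ 2
      ≤ X.card * k4Count G X Y := by
  have h1 : ∑ p ∈ X, ((Y.card : ℝ) - (Fintype.card V : ℝ) ^ 2 + codeg G p ^ 2) ≤ k4Count G X Y :=
    Finset.sum_le_sum fun p hp => row_count G (hX hp) hY
  rw [Finset.sum_add_distrib, Finset.sum_const, nsmul_eq_mul] at h1
  have h2 : (∑ p ∈ X, codeg G p) ^ 2 ≤ X.card * ∑ p ∈ X, codeg G p ^ 2 := sq_sum_le_card_mul_sum_sq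
  have h3 : (0 : ℝ) ≤ X.card := Nat.cast_nonneg _
  nlinarith [mul_le_mul_of_nonneg_left h1 h3]

/-- The degree of `v`, as a real number. -/
def nbrCount {V : Type} [Fintype V] (G : SimpleGraph V) (v : V) : ℝ :=
  (Finset.univ.filter (G.Adj v)).card

theorem codeg_le {V : Type} [Fintype V] (G : SimpleGraph V) (p : V × V) :
    codeg G p ≤ nbrCount G p.1 := by
  unfold codeg nbrCount
  exact_mod_cast Finset.card_le_card fun z hz => by
    simp only [commonNbrs, Finset.mem_filter, Finset.mem_univ, true_and] at hz ⊢
    exact hz.1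

theorem nbrCount_le {V : Type} [Fintype V] (G : SimpleGraph V) (v : V) :
    nbrCount G v ≤ Fintype.card V := by
  unfold nbrCount
  exact_mod_cast Finset.card_le_univ _

theorem le_codeg {V : Type} [Fintype V] (G : SimpleGraph V) (p : V × V) :
    nbrCount G p.1 + nbrCount G p.2 - Fintype.card V ≤ codeg G p := by
  have h1 := Finset.card_union_add_card_inter
    (Finset.univ.filter (G.Adj p.1)) (Finset.univ.filter (G.Adj p.2))
  have h2 : Finset.univ.filter (G.Adj p.1) ∩ Finset.univ.filter (G.Adj p.2)
      = commonNbrs G p.1 p.2 := by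
    ext z; simp [commonNbrs]
  rw [h2] at h1
  have h3 := Finset.card_le_univ
    (Finset.univ.filter (G.Adj p.1) ∪ Finset.univ.filter (G.Adj p.2))
  have h1' : (((Finset.univ.filter (G.Adj p.1) ∪ Finset.univ.filter (G.Adj p.2)).card : ℕ) : ℝ)
    + codeg G p = nbrCount G p.1 + nbrCount G p.2 := by
    unfold codeg nbrCount; exact_mod_cast h1
  have h3' : (((Finset.univ.filter (G.Adj p.1) ∪ Finset.univ.filter (G.Adj p.2)).card : ℕ) : ℝ)
    ≤ Fintype.card V := by exact_mod_cast h3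
  linarith

theorem sum_adjPairs_fst {V : Type} [Fintype V] (G : SimpleGraph V) (f : V → ℝ) :
    ∑ p ∈ adjPairs G, f p.1 = ∑ v, nbrCount G v * f v := by
  unfold adjPairs nbrCount
  rw [Finset.sum_filter, Fintype.sum_prod_type]
  refine Finset.sum_congr rfl fun v _ => ?_
  simp only
  rw [← Finset.sum_filter, Finset.sum_const, nsmul_eq_mul]

theorem card_adjPairs {V : Type} [Fintype V] (G : SimpleGraph V) :
    ((adjPairs G).card : ℝ) = ∑ v, nbrCount G v := by
  have := sum_adjPairs_fst G fun _ => 1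
  simpa using this

/-- The number of triangles on an edge is at most the degree of its first vertex, and the total
excess of the degrees over `9n/10` is controlled by the number of edges. -/
theorem sum_codeg_le {V : Type} [Fintype V] (G : SimpleGraph V)
    (hdeg : ∀ v, 9 / 10 * (Fintype.card V : ℝ) ≤ nbrCount G v)
    {Y : Finset (V × V)} (hY : Y ⊆ adjPairs G) :
    ∑ p ∈ Y, codeg G p ≤ 9 / 10 * (Fintype.card V : ℝ) * Y.card
      + Fintype.card V * ((adjPairs G).card - 9 / 10 * (Fintype.card V : ℝ) ^ 2) := by
  set n : ℝ := ((Fintype.card V : ℕ) : ℝ) with hn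
  have hn0 : 0 ≤ n := Nat.cast_nonneg _
  have h1 : ∑ p ∈ Y, codeg G p ≤ ∑ p ∈ Y, (9 / 10 * n + (nbrCount G p.1 - 9 / 10 * n)) :=
    Finset.sum_le_sum fun p _ => by linarith [codeg_le G p]
  rw [Finset.sum_add_distrib, Finset.sum_const, nsmul_eq_mul] at h1
  have h2 : ∑ p ∈ Y, (nbrCount G p.1 - 9 / 10 * n)
      ≤ ∑ p ∈ adjPairs G, (nbrCount G p.1 - 9 / 10 * n) :=
    Finset.sum_le_sum_of_subset_of_nonneg hY fun p _ _ => by linarith [hdeg p.1]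
  have h3 := sum_adjPairs_fst G fun v => nbrCount G v - 9 / 10 * n
  have h4 : ∑ v, nbrCount G v * (nbrCount G v - 9 / 10 * n)
      ≤ ∑ v, n * (nbrCount G v - 9 / 10 * n) :=
    Finset.sum_le_sum fun v _ =>
      mul_le_mul_of_nonneg_right (nbrCount_le G v) (by linarith [hdeg v])
  rw [← Finset.mul_sum, Finset.sum_sub_distrib, ← card_adjPairs, Finset.sum_const,
    Finset.card_univ, nsmul_eq_mul, ← hn] at h4
  nlinarith

/-- The cut inequality for the flow from `B` to `A`, cleared of denominators. Dividing by the total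
codegree and by `3n` turns the left side into the demand of `A` when every triangle has the weight
`w₀`, and the right side into the capacity of the cut when each arc has capacity `w₀ / (3n)`. -/
theorem cut_bound {V : Type} [Fintype V] [Nonempty V] (G : SimpleGraph V)
    (hdeg : ∀ v, 9 / 10 * (Fintype.card V : ℝ) ≤ nbrCount G v)
    {A B : Finset (V × V)} (hAB : Disjoint A B) (hD : A ∪ B = adjPairs G) :
    3 * (Fintype.card V : ℝ) * (A.card * (∑ p ∈ B, codeg G p) - B.card * ∑ p ∈ A, codeg G p)
      ≤ (adjPairs G).card * k4Count G A B := by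
  have hA : A ⊆ adjPairs G := hD ▸ Finset.subset_union_left
  have hB : B ⊆ adjPairs G := hD ▸ Finset.subset_union_right
  have hE : 0 ≤ k4Count G A B :=
    Finset.sum_nonneg fun p _ => Finset.sum_nonneg fun q _ => k4Ind_nonneg G p q
  have hM : ((adjPairs G).card : ℝ) = A.card + B.card := by
    rw [← hD, Finset.card_union_of_disjoint hAB]; push_cast; ring
  rcases A.eq_empty_or_nonempty with rfl | hAne
  · simp only [Finset.card_empty, Nat.cast_zero, zero_mul, Finset.sum_empty, mul_zero, sub_zero]
    positivity
  rcases B.eq_empty_or_nonempty with rfl | hBne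
  · simp only [Finset.card_empty, Nat.cast_zero, zero_mul, Finset.sum_empty, mul_zero, sub_zero]
    positivity
  have cA := cut_count G hA hB
  have cB := cut_count G hB hA
  rw [k4Count_comm G B A] at cB
  have dB := sum_codeg_le G hdeg hB
  have hcA : (0 : ℝ) < A.card := by exact_mod_cast hAne.card_pos
  have hcB : (0 : ℝ) < B.card := by exact_mod_cast hBne.card_pos
  have hn : (0 : ℝ) < Fintype.card V := by exact_mod_cast Fintype.card_pos
  have hM9 : 9 / 10 * (Fintype.card V : ℝ) ^ 2 ≤ A.card + B.card := by
    rw [← hM, card_adjPairs]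
    calc 9 / 10 * (Fintype.card V : ℝ) ^ 2 = ∑ _v : V, 9 / 10 * (Fintype.card V : ℝ) := by
          rw [Finset.sum_const, Finset.card_univ, nsmul_eq_mul]; ring
      _ ≤ _ := Finset.sum_le_sum fun v _ => hdeg v
  have lA : 4 / 5 * (Fintype.card V : ℝ) * A.card ≤ ∑ p ∈ A, codeg G p := by
    have : ∑ _p ∈ A, 4 / 5 * (Fintype.card V : ℝ) ≤ ∑ p ∈ A, codeg G p :=
      Finset.sum_le_sum fun p _ => by linarith [le_codeg G p, hdeg p.1, hdeg p.2]
    rw [Finset.sum_const, nsmul_eq_mul] at this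
    linarith
  have uB : ∑ p ∈ B, codeg G p ≤ (Fintype.card V : ℝ) * B.card := by
    have : ∑ p ∈ B, codeg G p ≤ ∑ _p ∈ B, (Fintype.card V : ℝ) :=
      Finset.sum_le_sum fun p _ => (codeg_le G p).trans (nbrCount_le G p.1)
    rw [Finset.sum_const, nsmul_eq_mul] at this
    linarith
  rw [hM] at dB ⊢
  generalize (Fintype.card V : ℝ) = n at *
  generalize (A.card : ℝ) = α at *
  generalize (B.card : ℝ) = β at *
  generalize ∑ p ∈ A, codeg G p = sA at *
  generalize ∑ p ∈ B, codeg G p = sB at *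
  generalize k4Count G A B = e at *
  have key := cut_numeric (α / n ^ 2) (β / n ^ 2) (sB / (β * n)) (sA / (α * n)) (e / n ^ 4)
    (by positivity) (by positivity)
    (by rw [← add_div, le_div_iff₀ (by positivity)]; linarith)
    (by rw [le_div_iff₀ (by positivity)]; linarith)
    (by rw [div_le_one (by positivity)]; linarith)
    (by
      have e1 : (sB / (β * n) - 9 / 10) * (β / n ^ 2) = (sB - 9 / 10 * n * β) / n ^ 3 := by
        field_simp
      have e2 : α / n ^ 2 + β / n ^ 2 - 9 / 10 = (n * (α + β - 9 / 10 * n ^ 2)) / n ^ 3 := by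
        field_simp
      rw [e1, e2]
      gcongr
      linarith)
    (by positivity)
    (by
      have e1 : β / n ^ 2 * (α / n ^ 2 - (1 - (sB / (β * n)) ^ 2))
          = (β ^ 2 * (α - n ^ 2) + sB ^ 2) / (β * n ^ 4) := by
        field_simp; ring
      have e2 : e / n ^ 4 = β * e / (β * n ^ 4) := by field_simp
      rw [e1, e2]
      gcongr)
    (by
      have e1 : α / n ^ 2 * (β / n ^ 2 - (1 - (sA / (α * n)) ^ 2))
          = (α ^ 2 * (β - n ^ 2) + sA ^ 2) / (α * n ^ 4) := by
        field_simp; ring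
      have e2 : e / n ^ 4 = α * e / (α * n ^ 4) := by field_simp
      rw [e1, e2]
      gcongr)
  have e1 : 3 * (α / n ^ 2) * (β / n ^ 2) * (sB / (β * n) - sA / (α * n))
      = (3 * n * (α * sB - β * sA)) / n ^ 6 := by
    field_simp
  have e2 : (α / n ^ 2 + β / n ^ 2) * (e / n ^ 4) = ((α + β) * e) / n ^ 6 := by
    field_simp
  rw [e1, e2, div_le_div_iff_of_pos_right (by positivity)] at key
  exact key

/-! ### Moving weight between opposite edges -/

/-- The triangles on the edge `uv` correspond to the common neighbours of `u` and `v`. -/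
theorem sum_triangles {V : Type} [Fintype V] (G : SimpleGraph V) (w : Finset V → ℝ) {u v : V}
    (huv : G.Adj u v) :
    ∑ t ∈ (G.cliqueFinset 3).filter (fun t => u ∈ t ∧ v ∈ t), w t
      = ∑ z ∈ commonNbrs G u v, w {u, v, z} := by
  symm
  refine Finset.sum_bij (fun z _ => {u, v, z}) ?_ ?_ ?_ ?_
  · intro z hz
    simp only [commonNbrs, Finset.mem_filter, Finset.mem_univ, true_and] at hz
    simp only [Finset.mem_filter, SimpleGraph.mem_cliqueFinset_iff,
      SimpleGraph.is3Clique_triple_iff]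
    exact ⟨⟨huv, hz.1, hz.2⟩, by simp, by simp⟩
  · intro z hz z' hz' h
    simp only [commonNbrs, Finset.mem_filter, Finset.mem_univ, true_and] at hz hz'
    have : z ∈ ({u, v, z'} : Finset V) := by rw [← h]; simp
    simp only [Finset.mem_insert, Finset.mem_singleton] at this
    rcases this with rfl | rfl | rfl
    · exact absurd hz.1 (G.irrefl)
    · exact absurd hz.2 (G.irrefl)
    · rfl
  · intro t ht
    simp only [Finset.mem_filter, SimpleGraph.mem_cliqueFinset_iff] at ht
    obtain ⟨hc, hu, hv⟩ := ht
    have hne := huv.ne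
    have hv' : v ∈ t.erase u := Finset.mem_erase.2 ⟨hne.symm, hv⟩
    have hcard : ((t.erase u).erase v).card = 1 := by
      rw [Finset.card_erase_of_mem hv', Finset.card_erase_of_mem hu, hc.card_eq]
    obtain ⟨z, hz⟩ := Finset.card_eq_one.1 hcard
    have ht : ({u, v, z} : Finset V) = t := by
      rw [← Finset.insert_erase hu, ← Finset.insert_erase hv', hz]
    refine ⟨z, ?_, ht⟩
    rw [← ht, SimpleGraph.is3Clique_triple_iff] at hc
    simp only [commonNbrs, Finset.mem_filter, Finset.mem_univ, true_and]
    exact ⟨hc.2.1, hc.2.2⟩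
  · intro z _; rfl

/-- The change of weight of the triangle `t` (up to a factor) when `Z a b c d` units of weight are moved
from `cd` to `ab` for all `a, b, c, d`. For `Z` supported on copies of `K₄`, a summand is nonzero only
if `abc` is an ordering of `t` and `d ∉ t`. -/
def shift {V : Type} [Fintype V] (Z : V → V → V → V → ℝ) (t : Finset V) : ℝ :=
  ∑ a ∈ t, ∑ b ∈ t, ∑ c ∈ t, ∑ d, (Z a b c d + Z a b d c)

/-- Effect of `shift` on an edge. Only the terms in which `uv` is one of the two opposite edges survive:
those moving weight to another edge of a triangle on `uv` cancel in pairs by antisymmetry. -/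
theorem sum_shift {V : Type} [Fintype V] (G : SimpleGraph V) (Z : V → V → V → V → ℝ)
    (hanti : ∀ a b c d, Z c d a b = -Z a b c d)
    (hzero : ∀ a b c d, ¬ K4Pair G (a, b) (c, d) → Z a b c d = 0) {u v : V} (huv : G.Adj u v) :
    ∑ z ∈ commonNbrs G u v, shift Z {u, v, z}
      = 2 * (∑ c, ∑ d, Z u v c d) + 2 * ∑ c, ∑ d, Z v u c d := by
  have q1 : ∀ a c d, Z a a c d = 0 := fun a c d => hzero _ _ _ _ fun h => G.irrefl h.1
  have q3 : ∀ a b d, Z a b a d = 0 := fun a b d => hzero _ _ _ _ fun h => G.irrefl h.2.2.1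
  have q4 : ∀ a b d, Z a b d a = 0 := fun a b d => hzero _ _ _ _ fun h => G.irrefl h.2.2.2.1
  have q5 : ∀ a b d, Z b a a d = 0 := fun a b d => hzero _ _ _ _ fun h => G.irrefl h.2.2.2.2.1
  have q6 : ∀ a b d, Z b a d a = 0 := fun a b d => hzero _ _ _ _ fun h => G.irrefl h.2.2.2.2.2
  -- The terms of `shift Z {u, v, z}` in which no vertex is repeated within the triangle.
  let S : V → ℝ := fun z => ∑ d,
    ((Z u v z d + Z u v d z) + (Z v u z d + Z v u d z) + (Z u z v d + Z u z d v)
      + (Z z u v d + Z z u d v) + (Z v z u d + Z v z d u) + (Z z v u d + Z z v d u))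
  have h1 : ∀ z ∈ commonNbrs G u v, shift Z {u, v, z} = S z := by
    intro z hz
    simp only [commonNbrs, Finset.mem_filter, Finset.mem_univ, true_and] at hz
    have n1 := huv.ne
    have n2 := hz.1.ne
    have n3 := hz.2.ne
    have expand : ∀ f : V → ℝ, ∑ a ∈ ({u, v, z} : Finset V), f a = f u + (f v + f z) := by
      intro f
      rw [Finset.sum_insert (by simp [n1, n2]), Finset.sum_insert (by simp [n3]),
        Finset.sum_singleton]
    simp only [shift, expand, S, ← Finset.sum_add_distrib]
    refine Finset.sum_congr rfl fun d _ => ?_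
    simp only [q1, q3, q4, q5, q6]
    ring
  have h2 : ∀ z ∉ commonNbrs G u v, S z = 0 := by
    intro z hz
    simp only [commonNbrs, Finset.mem_filter, Finset.mem_univ, true_and] at hz
    refine Finset.sum_eq_zero fun d _ => ?_
    rw [hzero u v z d fun h => hz ⟨h.2.2.1, h.2.2.2.2.1⟩,
      hzero u v d z fun h => hz ⟨h.2.2.2.1, h.2.2.2.2.2⟩,
      hzero v u z d fun h => hz ⟨h.2.2.2.2.1, h.2.2.1⟩,
      hzero v u d z fun h => hz ⟨h.2.2.2.2.2, h.2.2.2.1⟩,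
      hzero u z v d fun h => hz ⟨h.1, h.2.2.2.2.1.symm⟩,
      hzero u z d v fun h => hz ⟨h.1, h.2.2.2.2.2.symm⟩,
      hzero z u v d fun h => hz ⟨h.1.symm, h.2.2.1.symm⟩,
      hzero z u d v fun h => hz ⟨h.1.symm, h.2.2.2.1.symm⟩,
      hzero v z u d fun h => hz ⟨h.2.2.2.2.1.symm, h.1⟩,
      hzero v z d u fun h => hz ⟨h.2.2.2.2.2.symm, h.1⟩,
      hzero z v u d fun h => hz ⟨h.2.2.1.symm, h.1.symm⟩,
      hzero z v d u fun h => hz ⟨h.2.2.2.1.symm, h.1.symm⟩]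
    ring
  rw [Finset.sum_congr rfl h1, Finset.sum_subset (Finset.subset_univ _) fun z _ hz => h2 z hz]
  simp only [S, Finset.sum_add_distrib]
  have s1 : ∀ f : V → V → ℝ, ∑ z, ∑ d, f d z = ∑ z, ∑ d, f z d := fun f => Finset.sum_comm
  have a1 : ∑ z, ∑ d, Z v z u d = -∑ z, ∑ d, Z u z v d := by
    rw [Finset.sum_comm]; simp only [← Finset.sum_neg_distrib, ← hanti]
  have a2 : ∑ z, ∑ d, Z z v u d = -∑ z, ∑ d, Z u z d v := by
    rw [Finset.sum_comm]; simp only [← Finset.sum_neg_distrib, ← hanti]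
  have a3 : ∑ z, ∑ d, Z v z d u = -∑ z, ∑ d, Z z u v d := by
    rw [Finset.sum_comm]; simp only [← Finset.sum_neg_distrib, ← hanti]
  have a4 : ∑ z, ∑ d, Z z v d u = -∑ z, ∑ d, Z z u d v := by
    rw [Finset.sum_comm]; simp only [← Finset.sum_neg_distrib, ← hanti]
  rw [s1 fun z d => Z u v z d, s1 fun z d => Z v u z d, a1, a2, a3, a4]
  ring

/-- For each `d`, twelve terms of `shift` are not forced to vanish: six orderings of `t`, and the two
orderings of the opposite edge. -/
theorem shift_lower {V : Type} [Fintype V] (G : SimpleGraph V) (Z : V → V → V → V → ℝ) {κ : ℝ}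
    (hκ : ∀ a b c d, -κ ≤ Z a b c d)
    (hzero : ∀ a b c d, ¬ K4Pair G (a, b) (c, d) → Z a b c d = 0)
    {t : Finset V} (ht : t.card = 3) : -(12 * κ * Fintype.card V) ≤ shift Z t := by
  obtain ⟨u, v, z, n1, n2, n3, rfl⟩ := Finset.card_eq_three.1 ht
  have q1 : ∀ a c d, Z a a c d = 0 := fun a c d => hzero _ _ _ _ fun h => G.irrefl h.1
  have q3 : ∀ a b d, Z a b a d = 0 := fun a b d => hzero _ _ _ _ fun h => G.irrefl h.2.2.1
  have q4 : ∀ a b d, Z a b d a = 0 := fun a b d => hzero _ _ _ _ fun h => G.irrefl h.2.2.2.1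
  have q5 : ∀ a b d, Z b a a d = 0 := fun a b d => hzero _ _ _ _ fun h => G.irrefl h.2.2.2.2.1
  have q6 : ∀ a b d, Z b a d a = 0 := fun a b d => hzero _ _ _ _ fun h => G.irrefl h.2.2.2.2.2
  have expand : ∀ f : V → ℝ, ∑ a ∈ ({u, v, z} : Finset V), f a = f u + (f v + f z) := by
    intro f
    rw [Finset.sum_insert (by simp [n1, n2]), Finset.sum_insert (by simp [n3]),
      Finset.sum_singleton]
  have h0 : -(12 * κ * Fintype.card V) = ∑ _d : V, -(12 * κ) := by
    rw [Finset.sum_const, Finset.card_univ, nsmul_eq_mul]; ring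
  rw [h0]
  simp only [shift, expand, ← Finset.sum_add_distrib]
  refine Finset.sum_le_sum fun d _ => ?_
  simp only [q1, q3, q4, q5, q6]
  linarith [hκ u v z d, hκ u v d z, hκ v u z d, hκ v u d z, hκ u z v d, hκ u z d v,
    hκ z u v d, hκ z u d v, hκ v z u d, hκ v z d u, hκ z v u d, hκ z v d u]

theorem codeg_swap {V : Type} [Fintype V] (G : SimpleGraph V) (u v : V) :
    codeg G (v, u) = codeg G (u, v) := by
  simp only [codeg, commonNbrs, and_comm]

/-! ### The decomposition -/

theorem decomp_of_minDegree {V : Type} [Fintype V] [Nonempty V] (G : SimpleGraph V)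
    (hdeg : ∀ v, 9 / 10 * (Fintype.card V : ℝ) ≤ nbrCount G v) : HasFracTriangleDecomp G := by
  have hn : (0 : ℝ) < Fintype.card V := by exact_mod_cast Fintype.card_pos
  have hcod : ∀ p, 0 < codeg G p := fun p => by
    linarith [le_codeg G p, hdeg p.1, hdeg p.2]
  have hM : (0 : ℝ) < (adjPairs G).card := by
    rw [card_adjPairs]
    exact Finset.sum_pos (fun v _ => by linarith [hdeg v]) Finset.univ_nonempty
  have hS : 0 < ∑ p ∈ adjPairs G, codeg G p :=
    Finset.sum_pos (fun p _ => hcod p) (Finset.card_pos.1 (by exact_mod_cast hM))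
  set n : ℝ := ((Fintype.card V : ℕ) : ℝ) with hndef
  set M : ℝ := (((adjPairs G).card : ℕ) : ℝ) with hMdef
  set S : ℝ := ∑ p ∈ adjPairs G, codeg G p with hSdef
  obtain ⟨w₀, hw₀⟩ : ∃ w₀, w₀ = M / S := ⟨_, rfl⟩
  have hw₀pos : 0 < w₀ := hw₀ ▸ div_pos hM hS
  have hw₀S : w₀ * S = M := by rw [hw₀]; field_simp
  -- Twelve terms of size at most `κ` per vertex, scaled by `1/4`, use up exactly `w₀`.
  obtain ⟨κ, hκ⟩ : ∃ κ, κ = w₀ / (3 * n) := ⟨_, rfl⟩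
  have hκpos : 0 < κ := by rw [hκ]; positivity
  have hκn : 3 * κ * n = w₀ := by rw [hκ]; field_simp
  obtain ⟨x, hx0, hxc, hxd⟩ := flow (fun p q : V × V => κ * k4Ind G p q)
    (fun p => if p ∈ adjPairs G then 1 - w₀ * codeg G p else 0)
    (fun p q => mul_nonneg hκpos.le (k4Ind_nonneg G p q))
    (by
      rw [← Finset.sum_filter, Finset.filter_mem_eq_inter, Finset.univ_inter,
        Finset.sum_sub_distrib, ← Finset.mul_sum, ← hSdef, hw₀S]
      simp [hMdef])
    (by
      intro A
      have hdis : Disjoint (A ∩ adjPairs G) (adjPairs G \ A) :=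
        Finset.disjoint_left.2 fun p h1 h2 =>
          (Finset.mem_sdiff.1 h2).2 (Finset.mem_inter.1 h1).1
      have hun : A ∩ adjPairs G ∪ adjPairs G \ A = adjPairs G := by
        ext p; simp only [Finset.mem_union, Finset.mem_inter, Finset.mem_sdiff]; tauto
      have hcb := cut_bound G hdeg hdis hun
      have hSsum : S = ∑ p ∈ A ∩ adjPairs G, codeg G p + ∑ p ∈ adjPairs G \ A, codeg G p := by
        rw [← Finset.sum_union hdis, hun]
      have hMsum : M = (A ∩ adjPairs G).card + (adjPairs G \ A).card := by
        rw [hMdef, ← Nat.cast_add, ← Finset.card_union_of_disjoint hdis, hun]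
      have hcap : κ * k4Count G (A ∩ adjPairs G) (adjPairs G \ A)
          ≤ ∑ p ∈ A, ∑ q ∈ Aᶜ, κ * k4Ind G p q := by
        simp only [k4Count, Finset.mul_sum]
        have hnn : ∀ p q, 0 ≤ κ * k4Ind G p q :=
          fun p q => mul_nonneg hκpos.le (k4Ind_nonneg G p q)
        refine (Finset.sum_le_sum_of_subset_of_nonneg Finset.inter_subset_left
          fun p _ _ => Finset.sum_nonneg fun q _ => hnn p q).trans ?_
        refine Finset.sum_le_sum fun p _ => Finset.sum_le_sum_of_subset_of_nonneg ?_
          fun q _ _ => hnn p q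
        intro q hq
        exact Finset.mem_compl.2 (Finset.mem_sdiff.1 hq).2
      refine le_trans ?_ hcap
      rw [← Finset.sum_filter, Finset.filter_mem_eq_inter, Finset.sum_sub_distrib,
        ← Finset.mul_sum, Finset.sum_const, nsmul_eq_mul, mul_one]
      rw [← hMdef] at hcb
      generalize ((A ∩ adjPairs G).card : ℝ) = α at *
      generalize ((adjPairs G \ A).card : ℝ) = β at *
      generalize ∑ p ∈ A ∩ adjPairs G, codeg G p = sA at *
      generalize ∑ p ∈ adjPairs G \ A, codeg G p = sB at *
      generalize k4Count G (A ∩ adjPairs G) (adjPairs G \ A) = e at *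
      have h1 : M * (α - w₀ * sA) = w₀ * (α * sB - β * sA) := by
        have : M * α = w₀ * (sA + sB) * α := by rw [← hSsum, hw₀S]
        rw [mul_sub, this, hMsum]; ring
      have h2 : M * (α - w₀ * sA) ≤ M * (κ * e) := by
        rw [h1, ← hκn]
        nlinarith [mul_le_mul_of_nonneg_left hcb hκpos.le]
      exact le_of_mul_le_mul_left h2 hM)
  -- The net flow from `cd` to `ab`.
  let Z : V → V → V → V → ℝ := fun a b c d => x (a, b) (c, d) - x (c, d) (a, b)
  have hanti : ∀ a b c d, Z c d a b = -Z a b c d := fun a b c d => by simp only [Z]; ring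
  have hx1 : ∀ p q, x p q ≤ κ := fun p q => (hxc p q).trans (by
    unfold k4Ind; split_ifs <;> linarith)
  have hxz : ∀ p q, ¬ K4Pair G p q → x p q = 0 := fun p q h =>
    le_antisymm (by simpa [k4Ind, h] using hxc p q) (hx0 p q)
  have hzero : ∀ a b c d, ¬ K4Pair G (a, b) (c, d) → Z a b c d = 0 := fun a b c d h => by
    simp only [Z]
    rw [hxz _ _ h, hxz _ _ fun h' => h h'.symm, sub_zero]
  have hlow : ∀ a b c d, -κ ≤ Z a b c d := fun a b c d => by
    simp only [Z]; linarith [hx0 (a, b) (c, d), hx1 (c, d) (a, b)]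
  refine ⟨fun t => if t.card = 3 then w₀ + shift Z t / 4 else 0, fun t => ?_, fun u v huv => ?_⟩
  · simp only
    split_ifs with ht
    · have := shift_lower G Z hlow hzero ht
      rw [← hndef] at this
      nlinarith
    · exact le_rfl
  · rw [sum_triangles G _ huv]
    have hcard : ∀ z ∈ commonNbrs G u v, ({u, v, z} : Finset V).card = 3 := by
      intro z hz
      simp only [commonNbrs, Finset.mem_filter, Finset.mem_univ, true_and] at hz
      exact Finset.card_eq_three.2 ⟨u, v, z, huv.ne, hz.1.ne, hz.2.ne, rfl⟩
    rw [Finset.sum_congr rfl fun z hz => if_pos (hcard z hz), Finset.sum_add_distrib,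
      Finset.sum_const, nsmul_eq_mul, ← Finset.sum_div, sum_shift G Z hanti hzero huv]
    have hdiv : ∀ a b, G.Adj a b → ∑ c, ∑ d, Z a b c d = 1 - w₀ * codeg G (a, b) := by
      intro a b hab
      have h1 := hxd (a, b)
      rw [if_pos (by simpa [adjPairs] using hab), Fintype.sum_prod_type] at h1
      exact h1
    rw [hdiv u v huv, hdiv v u huv.symm, codeg_swap G u v]
    have : ((commonNbrs G u v).card : ℝ) = codeg G (u, v) := rfl
    rw [this]
    ring

end

theorem stmt_0 :
    ∀ ε : ℝ, 0 < ε → ∃ n₀ : ℕ,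
      ∀ (V : Type) [Fintype V] (G : SimpleGraph V) (n : ℕ),
        Fintype.card V = n → n₀ ≤ n →
        (∀ v : V, ((9 / 10 + ε) * n : ℝ) ≤ G.degree v) →
        HasFracTriangleDecomp G := by
  intro ε hε
  -- No largeness is needed beyond having a vertex.
  refine ⟨1, fun V _ G n hn h1 hdeg => ?_⟩
  have : Nonempty V := Fintype.card_pos_iff.1 (by omega)
  refine decomp_of_minDegree G fun v => ?_
  have h2 : nbrCount G v = G.degree v := by
    rw [nbrCount, ← SimpleGraph.card_neighborFinset_eq_degree, SimpleGraph.neighborFinset_eq_filter]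
  rw [h2, hn]
  have h3 : 0 ≤ ε * (n : ℝ) := by positivity
  linarith [hdeg v]
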